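/- Let p be a prime and let a_1,…,a_k ∈ 𝔽_p be distinct. Then |∑_{x=0}^{p-1} ∏_{i=1}^{k} χ(x - a_i)| ≤ (k-1)√p, where χ is the Legendre symbol mod p (with χ(0) = 0). -/

import Mathlib

/-!
The character `g ↦ ∏ a ∈ s, χ (g a)` on monic polynomials has an L-series which is a polynomial of
degree at most `k - 1`, where `k` is the size of `s`. Its logarithmic derivative shows that minus
the `n`-th power sum of its inverse roots is the analogous character sum over the extension of
degree `n`, so it is enough that every inverse root `α` satisfies `‖α‖ ≤ √q`. For odd `k`,
Stepanov's method bounds the sums over the extensions of degree `2 * m` by a constant times `q ^ m`,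
which forces `‖α ^ 2‖ ≤ q`. For even `k`, a Möbius transformation sending one point of `s` to
infinity reduces the sum to one over `k - 1` points, up to a sign and one extra term.
-/

open Polynomial UniqueFactorizationMonoid Filter Topology
open scoped PowerSeries

section CharacteristicPolynomial

theorem charpoly_blockDiagonal {R m n : Type*} [CommRing R] [Fintype m] [DecidableEq m]
    [Fintype n] [DecidableEq n] (M : n → Matrix m m R) :
    (Matrix.blockDiagonal M).charpoly = ∏ k, (M k).charpoly := by
  have hcharmatrix : (Matrix.blockDiagonal M).charmatrix =
      Matrix.blockDiagonal fun k => (M k).charmatrix := by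
    ext ⟨i, k⟩ ⟨j, l⟩
    by_cases hkl : k = l
    · subst hkl
      simp [Matrix.charmatrix, Matrix.blockDiagonal_apply, Matrix.diagonal_apply]
    · simp [Matrix.charmatrix, Matrix.blockDiagonal_apply, hkl]
  simp only [Matrix.charpoly, hcharmatrix, Matrix.det_blockDiagonal]

variable (F : Type*) {K : Type*} [Field F] [Field K] [Algebra F K] [FiniteDimensional F K]

theorem charpoly_lmul_eq_minpoly_pow (x : K) :
    (Algebra.lmul F K x).charpoly =
      minpoly F x ^ (Module.finrank F K / (minpoly F x).natDegree) := by
  classical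
  have hx : IsIntegral F x := Algebra.IsIntegral.isIntegral x
  let b := IntermediateField.adjoin.powerBasis hx
  let c := Module.finBasis (IntermediateField.adjoin F {x}) K
  have hblock : Algebra.leftMulMatrix (b.basis.smulTower c) x =
      Matrix.blockDiagonal fun _ => Algebra.leftMulMatrix b.basis b.gen :=
    Algebra.smulTower_leftMulMatrix_algebraMap b.basis c b.gen
  have hexp : Module.finrank (IntermediateField.adjoin F {x}) K =
      Module.finrank F K / (minpoly F x).natDegree := by
    rw [← Module.finrank_mul_finrank F (IntermediateField.adjoin F {x}) K,
      IntermediateField.adjoin.finrank hx, Nat.mul_div_cancel_left _ (minpoly.natDegree_pos hx)]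
  calc (Algebra.lmul F K x).charpoly
      = (Algebra.leftMulMatrix (b.basis.smulTower c) x).charpoly :=
        (LinearMap.charpoly_toMatrix _ _).symm
    _ = minpoly F b.gen ^ Module.finrank (IntermediateField.adjoin F {x}) K := by
        rw [hblock, charpoly_blockDiagonal, Finset.prod_const, Finset.card_univ, Fintype.card_fin,
          charpoly_leftMulMatrix]
    _ = _ := by
        rw [hexp, IntermediateField.adjoin.powerBasis_gen, IntermediateField.minpoly_gen]

theorem eval_charpoly_lmul (x : K) (b : F) :
    (Algebra.lmul F K x).charpoly.eval b = Algebra.norm F (algebraMap F K b - x) := by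
  rw [LinearMap.eval_charpoly, ← AlgHom.commutes (Algebra.lmul F K), ← map_sub, Algebra.norm_apply]

theorem natDegree_charpoly_lmul (x : K) :
    (Algebra.lmul F K x).charpoly.natDegree = Module.finrank F K :=
  LinearMap.charpoly_natDegree _

end CharacteristicPolynomial

section Counting

variable {F K : Type*} [Field F] [Field K] [Fintype K] [Algebra F K]

theorem card_filter_minpoly_eq {P : F[X]} [DecidableEq F[X]] (hP : Irreducible P) (hm : P.Monic) :
    (Finset.univ.filter fun x : K => minpoly F x = P).card =
      if P.natDegree ∣ Module.finrank F K then P.natDegree else 0 := by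
  classical
  have : Finite F := Finite.of_injective _ (algebraMap F K).injective
  split_ifs with hdvd
  · have : Fact (Irreducible P) := ⟨hP⟩
    have hfinrank : Module.finrank F (AdjoinRoot P) = P.natDegree := by
      rw [(AdjoinRoot.powerBasis hP.ne_zero).finrank, AdjoinRoot.powerBasis_dim]
    have : Module.Finite F (AdjoinRoot P) := (AdjoinRoot.powerBasis hP.ne_zero).finite
    have : Finite (AdjoinRoot P) := Module.finite_of_finite F
    obtain ⟨φ⟩ : Nonempty (AdjoinRoot P →ₐ[F] K) :=
      FiniteField.nonempty_algHom_of_finrank_dvd (hfinrank ▸ hdvd)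
    have hroot : aeval (φ (AdjoinRoot.root P)) P = 0 := by simp [aeval_algHom_apply]
    have hsplit : (P.map (algebraMap F K)).Splits := by
      rw [minpoly.eq_of_irreducible_of_monic hP hroot hm]
      exact Normal.splits inferInstance _
    rw [← card_rootSet_eq_natDegree (PerfectField.separable_of_irreducible hP) hsplit,
      ← Set.toFinset_card]
    congr 1
    ext x
    simp only [Finset.mem_filter_univ, Set.mem_toFinset, mem_rootSet, hP.ne_zero, ne_eq,
      not_false_eq_true, true_and]
    exact ⟨fun h => h ▸ minpoly.aeval F x,
      fun hx => (minpoly.eq_of_irreducible_of_monic hP hx hm).symm⟩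
  · rw [Finset.card_eq_zero, Finset.filter_eq_empty_iff]
    rintro x - rfl
    exact hdvd (minpoly.degree_dvd (Algebra.IsIntegral.isIntegral x))

theorem mem_normalizedFactors_iff_irreducible_monic {g P : F[X]} [DecidableEq F] (hg : g ≠ 0) :
    P ∈ normalizedFactors g ↔ Irreducible P ∧ P.Monic ∧ P ∣ g := by
  rw [mem_normalizedFactors_iff' hg]
  refine and_congr_right fun hP => and_congr_left fun _ => ?_
  exact ⟨fun h => h ▸ monic_normalize hP.ne_zero, fun h => h.normalize_eq_self⟩

theorem sum_count_normalizedFactors_mul_natDegree {g : F[X]} [DecidableEq F] (hg : g ≠ 0) :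
    ∑ P ∈ (normalizedFactors g).toFinset, (normalizedFactors g).count P * P.natDegree =
      g.natDegree := by
  rw [← natDegree_eq_of_degree_eq
      (degree_eq_degree_of_associated (prod_normalizedFactors hg)),
    natDegree_multiset_prod _ (zero_notMem_normalizedFactors g), Finset.sum_multiset_map_count]
  simp only [smul_eq_mul]

theorem card_filter_charpoly_dvd {g : F[X]} [DecidableEq F] [DecidableRel (α := F[X]) (· ∣ ·)]
    (hg : g ≠ 0) :
    (Finset.univ.filter fun x : K => (Algebra.lmul F K x).charpoly ∣ g).card =
      ∑ P ∈ (normalizedFactors g).toFinset,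
        if P.natDegree ∣ Module.finrank F K ∧ P ^ (Module.finrank F K / P.natDegree) ∣ g
        then P.natDegree else 0 := by
  have hmaps : ∀ x ∈ Finset.univ.filter fun x : K => (Algebra.lmul F K x).charpoly ∣ g,
      minpoly F x ∈ (normalizedFactors g).toFinset := by
    intro x hx
    rw [Finset.mem_filter_univ, charpoly_lmul_eq_minpoly_pow] at hx
    have hint : IsIntegral F x := Algebra.IsIntegral.isIntegral x
    have hexp : Module.finrank F K / (minpoly F x).natDegree ≠ 0 :=
      (Nat.div_pos (Nat.le_of_dvd Module.finrank_pos (minpoly.degree_dvd hint))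
        (minpoly.natDegree_pos hint)).ne'
    rw [Multiset.mem_toFinset, mem_normalizedFactors_iff_irreducible_monic hg]
    exact ⟨minpoly.irreducible hint, minpoly.monic hint, (dvd_pow_self _ hexp).trans hx⟩
  rw [Finset.card_eq_sum_card_fiberwise hmaps]
  refine Finset.sum_congr rfl fun P hP => ?_
  obtain ⟨hirr, hmonic, -⟩ :=
    (mem_normalizedFactors_iff_irreducible_monic hg).1 (Multiset.mem_toFinset.1 hP)
  have hfiber : ((Finset.univ.filter fun x : K => (Algebra.lmul F K x).charpoly ∣ g).filter
      fun x => minpoly F x = P) = Finset.univ.filter fun x : K =>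
        minpoly F x = P ∧ P ^ (Module.finrank F K / P.natDegree) ∣ g := by
    ext x
    simp only [Finset.filter_filter, Finset.mem_filter_univ, charpoly_lmul_eq_minpoly_pow]
    constructor <;> rintro ⟨h₁, h₂⟩ <;> subst_vars <;> tauto
  by_cases hdvd : P ^ (Module.finrank F K / P.natDegree) ∣ g
  · simp only [hfiber, hdvd, and_true, card_filter_minpoly_eq hirr hmonic]
  · simp only [hfiber, hdvd, and_false, Finset.filter_false, Finset.card_empty, if_false]

theorem card_filter_pow_dvd {g P : F[X]} [DecidableEq F] [DecidableRel (α := F[X]) (· ∣ ·)]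
    (hg : g ≠ 0) (hP : Irreducible P) (hm : P.Monic) :
    ((Finset.range g.natDegree).filter fun r =>
        P.natDegree ∣ r + 1 ∧ P ^ ((r + 1) / P.natDegree) ∣ g).card =
      (normalizedFactors g).count P := by
  have hpos : 0 < P.natDegree := hP.natDegree_pos
  have hpow_dvd (j : ℕ) : P ^ j ∣ g ↔ j ≤ (normalizedFactors g).count P := by
    rw [pow_dvd_iff_le_emultiplicity, emultiplicity_eq_count_normalizedFactors hP hg,
      hm.normalize_eq_self, Nat.cast_le]
  have hle (j : ℕ) (hj : P ^ j ∣ g) : j * P.natDegree ≤ g.natDegree :=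
    natDegree_pow P j ▸ natDegree_le_of_dvd hj hg
  have hsucc (j : ℕ) : (j + 1) * P.natDegree - 1 + 1 = (j + 1) * P.natDegree :=
    Nat.sub_add_cancel (Nat.mul_pos j.succ_pos hpos)
  conv_rhs => rw [← Finset.card_range ((normalizedFactors g).count P)]
  symm
  refine Finset.card_nbij (fun j => (j + 1) * P.natDegree - 1) ?_ ?_ ?_
  · intro j hj
    have hdvd : P ^ (j + 1) ∣ g := (hpow_dvd _).2 (Finset.mem_range.1 hj)
    rw [Finset.mem_coe, Finset.mem_filter, hsucc, Nat.mul_div_cancel _ hpos]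
    exact ⟨Finset.mem_range.2 (Nat.lt_of_succ_le ((hsucc j).trans_le (hle _ hdvd))),
      Dvd.intro_left _ rfl, hdvd⟩
  · intro i _ j _ hij
    have hmul : (i + 1) * P.natDegree = (j + 1) * P.natDegree := by
      rw [← hsucc, ← hsucc j]; exact congrArg (· + 1) hij
    exact Nat.succ_injective (Nat.eq_of_mul_eq_mul_right hpos hmul)
  · intro r hr
    obtain ⟨-, ⟨j, hj⟩, hdvd⟩ := Finset.mem_filter.1 (Finset.mem_coe.1 hr)
    rw [hj, Nat.mul_div_cancel_left _ hpos, hpow_dvd] at hdvd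
    obtain ⟨i, rfl⟩ : ∃ i, j = i + 1 := ⟨j - 1, by grind⟩
    exact ⟨i, Finset.mem_coe.2 (Finset.mem_range.2 hdvd), by grind⟩

end Counting

theorem sum_card_filter_charpoly_dvd {F : Type*} [Field F] [DecidableRel (α := F[X]) (· ∣ ·)]
    (K : ℕ → Type*) [∀ r, Field (K r)] [∀ r, Fintype (K r)] [∀ r, Algebra F (K r)]
    (hK : ∀ r, Module.finrank F (K r) = r + 1) {g : F[X]} (hg : g ≠ 0) :
    ∑ r ∈ Finset.range g.natDegree,
      (Finset.univ.filter fun x : K r => (Algebra.lmul F (K r) x).charpoly ∣ g).card =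
        g.natDegree := by
  classical
  simp only [card_filter_charpoly_dvd hg, hK]
  rw [Finset.sum_comm]
  refine Eq.trans ?_ (sum_count_normalizedFactors_mul_natDegree hg)
  refine Finset.sum_congr rfl fun P hP => ?_
  obtain ⟨hirr, hmonic, -⟩ :=
    (mem_normalizedFactors_iff_irreducible_monic hg).1 (Multiset.mem_toFinset.1 hP)
  rw [← Finset.sum_filter, Finset.sum_const, smul_eq_mul, card_filter_pow_dvd hg hirr hmonic]

section LSeries

variable (F : Type*) [Field F] [Finite F]

theorem finite_setOf_monic_natDegree_eq (n : ℕ) : {g : F[X] | g.Monic ∧ g.natDegree = n}.Finite :=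
  have : Finite (degreeLT F n) := Finite.of_equiv _ (degreeLTEquiv F n).toEquiv.symm
  Set.finite_coe_iff.1 (Finite.of_equiv _ (monicEquivDegreeLT (R := F) n).symm)

/-- The set of monic polynomials of degree `n` over a finite field. -/
noncomputable def monicsOfDegree (n : ℕ) : Finset F[X] :=
  (finite_setOf_monic_natDegree_eq F n).toFinset

variable {F} {R : Type*} [CommSemiring R] (f : F[X] →* R)

/-- The L-series of a multiplicative function `f` on polynomials over a finite field: the formal
power series `∑ f g * T ^ deg g`, summed over all monic polynomials `g`. -/
noncomputable def lSeries : R⟦X⟧ :=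
  .mk fun n => ∑ g ∈ monicsOfDegree F n, f g

/-- The sum of a multiplicative function over the characteristic polynomials of the elements of
a finite extension `K` of `F`. These are the power sums attached to `lSeries f`. -/
noncomputable def charpolySum (K : Type*) [Field K] [Fintype K] [Algebra F K] : R :=
  ∑ x : K, f (Algebra.lmul F K x).charpoly

@[simp]
theorem mem_monicsOfDegree {n : ℕ} {g : F[X]} :
    g ∈ monicsOfDegree F n ↔ g.Monic ∧ g.natDegree = n := by
  simp [monicsOfDegree]

theorem add_mem_monicsOfDegree {n : ℕ} {g h : F[X]} (hg : g ∈ monicsOfDegree F n)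
    (hh : h.degree < n) : g + h ∈ monicsOfDegree F n := by
  rw [mem_monicsOfDegree] at hg ⊢
  have hdeg : h.degree < g.degree := by rwa [degree_eq_natDegree hg.1.ne_zero, hg.2]
  exact ⟨hg.1.add_of_left hdeg,
    (natDegree_eq_of_degree_eq (degree_add_eq_left_of_degree_lt hdeg)).trans hg.2⟩

theorem coeff_lSeries (n : ℕ) : (lSeries f).coeff n = ∑ g ∈ monicsOfDegree F n, f g :=
  PowerSeries.coeff_mk _ _

theorem coeff_zero_lSeries : (lSeries f).coeff 0 = 1 := by
  have hone : monicsOfDegree F 0 = {1} := by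
    ext g
    rw [mem_monicsOfDegree, Finset.mem_singleton]
    exact ⟨fun h => h.1.natDegree_eq_zero.1 h.2, by rintro rfl; simp⟩
  rw [coeff_lSeries, hone, Finset.sum_singleton, map_one]

theorem sum_filter_dvd_monicsOfDegree [DecidableRel (α := F[X]) (· ∣ ·)] {h : F[X]}
    (hh : h.Monic) (m : ℕ) :
    ∑ g ∈ monicsOfDegree F (h.natDegree + m) with h ∣ g, f g = f h * (lSeries f).coeff m := by
  rw [coeff_lSeries, Finset.mul_sum]
  symm
  refine Finset.sum_nbij (h * ·) ?_ ?_ ?_ fun g _ => (map_mul f h g).symm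
  · intro g hg
    rw [mem_monicsOfDegree] at hg
    rw [Finset.mem_filter, mem_monicsOfDegree, hh.natDegree_mul hg.1, hg.2]
    exact ⟨⟨hh.mul hg.1, rfl⟩, dvd_mul_right h g⟩
  · exact (mul_right_injective₀ hh.ne_zero).injOn
  · intro g hg
    obtain ⟨hg, g', rfl⟩ := Finset.mem_filter.1 (Finset.mem_coe.1 hg)
    obtain ⟨hmonic, hdeg⟩ := mem_monicsOfDegree.1 hg
    have hg' : g'.Monic := hh.of_mul_monic_left hmonic
    rw [hh.natDegree_mul hg', Nat.add_left_cancel_iff] at hdeg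
    exact ⟨g', Finset.mem_coe.2 (mem_monicsOfDegree.2 ⟨hg', hdeg⟩), rfl⟩

-- Logarithmic differentiation of the Euler product, without the product: count in two ways the
-- pairs of a monic `g` and an element of some `K r` whose characteristic polynomial divides `g`.
theorem derivative_lSeries (K : ℕ → Type*) [∀ r, Field (K r)] [∀ r, Fintype (K r)]
    [∀ r, Algebra F (K r)] (hK : ∀ r, Module.finrank F (K r) = r + 1) :
    d⁄dX R (lSeries f) = .mk (fun r => charpolySum f (K r)) * lSeries f := by
  classical
  ext n
  have hsum {r : ℕ} (hr : r ∈ Finset.range (n + 1)) (x : K r) :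
      ∑ g ∈ monicsOfDegree F (n + 1) with (Algebra.lmul F (K r) x).charpoly ∣ g, f g =
        f (Algebra.lmul F (K r) x).charpoly * (lSeries f).coeff (n - r) := by
    have : FiniteDimensional F (K r) := Module.Finite.of_finite
    rw [← sum_filter_dvd_monicsOfDegree f (LinearMap.charpoly_monic _), natDegree_charpoly_lmul,
      hK, add_right_comm, Nat.add_sub_cancel' (Finset.mem_range_succ_iff.1 hr)]
  calc (d⁄dX R (lSeries f)).coeff n
      = ∑ g ∈ monicsOfDegree F (n + 1), ∑ r ∈ Finset.range (n + 1),
          ∑ x : K r, if (Algebra.lmul F (K r) x).charpoly ∣ g then f g else 0 := by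
        rw [PowerSeries.coeff_derivative, coeff_lSeries, Finset.sum_mul]
        refine Finset.sum_congr rfl fun g hg => ?_
        obtain ⟨hmonic, hdeg⟩ := mem_monicsOfDegree.1 hg
        have hcount := sum_card_filter_charpoly_dvd K hK hmonic.ne_zero
        rw [hdeg] at hcount
        simp only [← Finset.sum_filter, Finset.sum_const, ← Finset.sum_smul, hcount]
        rw [nsmul_eq_mul, mul_comm, Nat.cast_succ]
    _ = ∑ r ∈ Finset.range (n + 1), charpolySum f (K r) * (lSeries f).coeff (n - r) := by
        rw [Finset.sum_comm]
        refine Finset.sum_congr rfl fun r hr => ?_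
        rw [Finset.sum_comm, charpolySum, Finset.sum_mul]
        exact Finset.sum_congr rfl fun x _ => by rw [← Finset.sum_filter, hsum hr]
    _ = _ := by
        simp only [PowerSeries.coeff_mul, PowerSeries.coeff_mk]
        rw [Finset.Nat.sum_antidiagonal_eq_sum_range_succ_mk]

end LSeries

section EvaluationCharacter

variable {F R : Type*} [Field F] [CommRing R]

/-- The character `g ↦ ∏ a ∈ s, χ (g a)` of the monoid of polynomials. -/
noncomputable def evalChar (χ : MulChar F R) (s : Finset F) : F[X] →* R :=
  ∏ a ∈ s, χ.toMonoidHom.comp (evalRingHom a : F[X] →* F)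

theorem evalChar_apply (χ : MulChar F R) (s : Finset F) (g : F[X]) :
    evalChar χ s g = ∏ a ∈ s, χ (g.eval a) := by
  simp [evalChar]

-- Multiplying the value at one point of `s` by a unit `b` with `χ b ≠ 1`, and keeping the values
-- at the other points, permutes the monic polynomials of degree `n`.
theorem coeff_lSeries_evalChar_eq_zero [Finite F] [IsDomain R] {χ : MulChar F R} (hχ : χ ≠ 1)
    {s : Finset F} (hs : s.Nonempty) {n : ℕ} (hn : s.card ≤ n) :
    (lSeries (evalChar χ s)).coeff n = 0 := by
  classical
  obtain ⟨a, ha⟩ := hs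
  obtain ⟨b, hb⟩ := MulChar.ne_one_iff.1 hχ
  let ℓ : F[X] := Lagrange.basis s id a
  have hℓ_deg : ℓ.degree < n := by
    rw [Lagrange.degree_basis Function.injective_id.injOn ha]
    exact_mod_cast (Nat.sub_lt (Finset.card_pos.2 ⟨a, ha⟩) one_pos).trans_le hn
  let τ (g : F[X]) : F[X] := g + ((b - 1) * g.eval a) • ℓ
  have hτ_self (g : F[X]) : (τ g).eval a = b * g.eval a := by
    have hℓ : ℓ.eval a = 1 := Lagrange.eval_basis_self Function.injective_id.injOn ha
    simp only [τ, eval_add, eval_smul, smul_eq_mul, hℓ]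
    ring
  have hτ_of_ne {c : F} (hc : c ∈ s.erase a) (g : F[X]) : (τ g).eval c = g.eval c := by
    obtain ⟨hca, hcs⟩ := Finset.mem_erase.1 hc
    have hℓ : ℓ.eval c = 0 := Lagrange.eval_basis_of_ne (v := id) hca.symm hcs
    simp only [τ, eval_add, eval_smul, hℓ, smul_zero, add_zero]
  have hτ_char (g : F[X]) : evalChar χ s (τ g) = χ b * evalChar χ s g := by
    simp only [evalChar_apply]
    rw [← Finset.mul_prod_erase _ _ ha, ← Finset.mul_prod_erase _ _ ha, hτ_self, map_mul,
      Finset.prod_congr rfl fun c hc => by rw [hτ_of_ne hc], mul_assoc]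
  have hτ_inj : Function.Injective τ := by
    intro g h hgh
    have heval : g.eval a = h.eval a := by
      have := congrArg (eval a) hgh
      rwa [hτ_self, hτ_self, b.isUnit.mul_right_inj] at this
    simpa only [τ, heval, add_left_inj] using hgh
  have hτ_mem (g : F[X]) (hg : g ∈ monicsOfDegree F n) : τ g ∈ monicsOfDegree F n :=
    add_mem_monicsOfDegree hg ((degree_smul_le _ _).trans_lt hℓ_deg)
  have hinv : χ b * (lSeries (evalChar χ s)).coeff n = (lSeries (evalChar χ s)).coeff n := by
    rw [coeff_lSeries, Finset.mul_sum]
    exact Finset.sum_nbij τ hτ_mem hτ_inj.injOn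
      (Finset.surjOn_of_injOn_of_card_le τ hτ_mem hτ_inj.injOn le_rfl) fun g _ => (hτ_char g).symm
  exact (mul_left_eq_self₀.1 hinv).resolve_left hb

end EvaluationCharacter

section LogarithmicDerivative

theorem derivative_prod_one_sub_C_mul_X {R : Type*} [CommRing R] (s : Multiset R) :
    ((derivative (s.map fun α => 1 - C α * X).prod : R[X]) : R⟦X⟧) =
      ((s.map fun α => 1 - C α * X).prod : R[X]) *
        PowerSeries.mk fun n => -(s.map (· ^ (n + 1))).sum := by
  induction s using Multiset.induction_on with
  | empty =>
    ext
    simp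
  | cons α s ih =>
    have hgeom : -PowerSeries.C α =
        ((1 - C α * X : R[X]) : R⟦X⟧) * PowerSeries.mk fun n => -α ^ (n + 1) := by
      ext n
      rcases n with _ | n <;>
        simp [sub_mul, mul_assoc, PowerSeries.coeff_succ_X_mul, pow_succ']
    have hmk : (PowerSeries.mk fun n => -((α ::ₘ s).map (· ^ (n + 1))).sum) =
        (PowerSeries.mk fun n => -α ^ (n + 1)) +
          PowerSeries.mk fun n => -(s.map (· ^ (n + 1))).sum := by
      ext n
      simp [add_comm]
    have hlin : derivative (1 - C α * X) = -C α := by simp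
    rw [hmk, Multiset.map_cons, Multiset.prod_cons, derivative_mul, hlin]
    push_cast
    rw [ih, hgeom]
    push_cast
    ring

theorem exists_eq_prod_one_sub_C_mul_X {k : Type*} [Field k] {L : k[X]} (hL : L.Splits)
    (h₀ : L.coeff 0 = 1) :
    ∃ s : Multiset k, s.card ≤ L.natDegree ∧ L = (s.map fun α => 1 - C α * X).prod := by
  refine ⟨L.roots.map (·⁻¹), (Multiset.card_map _ _).trans_le (card_roots' L), ?_⟩
  have hroot_ne {r : k} (hr : r ∈ L.roots) : r ≠ 0 := by
    rintro rfl
    exact one_ne_zero (h₀.symm.trans ((coeff_zero_eq_eval_zero L).trans (isRoot_of_mem_roots hr)))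
  have hprod : (L.roots.map (X - C ·)).prod =
      C (L.roots.map (-·)).prod * ((L.roots.map (·⁻¹)).map fun α => 1 - C α * X).prod := by
    rw [map_multiset_prod, Multiset.map_map, Multiset.map_map, ← Multiset.prod_map_mul]
    refine congrArg _ (Multiset.map_congr rfl fun r hr => ?_)
    have hinv : C r * C r⁻¹ = 1 := by rw [← C_mul, mul_inv_cancel₀ (hroot_ne hr), C_1]
    simp only [Function.comp_apply, C_neg]
    linear_combination (-X : k[X]) * hinv
  have hlead : L.leadingCoeff * (L.roots.map (-·)).prod = 1 := by
    rw [← h₀, coeff_zero_eq_eval_zero, hL.eval_eq_prod_roots]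
    simp only [zero_sub]
  calc L = C L.leadingCoeff * (L.roots.map (X - C ·)).prod := hL.eq_prod_roots
    _ = _ := by rw [hprod, ← mul_assoc, ← C_mul, hlead, C_1, one_mul]

theorem exists_powerSums_of_derivative_eq {k : Type*} [Field k] {L : k[X]} (hL : L.Splits)
    (h₀ : L.coeff 0 = 1) {G : k⟦X⟧} (hG : (derivative L : k⟦X⟧) = G * L) :
    ∃ s : Multiset k, s.card ≤ L.natDegree ∧ ∀ n, G.coeff n = -(s.map (· ^ (n + 1))).sum := by
  obtain ⟨s, hs, rfl⟩ := exists_eq_prod_one_sub_C_mul_X hL h₀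
  refine ⟨s, hs, fun n => ?_⟩
  have hne : (((s.map fun α => 1 - C α * X).prod : k[X]) : k⟦X⟧) ≠ 0 := by
    rw [Ne, coe_eq_zero_iff]
    exact fun h => one_ne_zero (h₀.symm.trans (by rw [h, coeff_zero]))
  rw [derivative_prod_one_sub_C_mul_X, mul_comm] at hG
  rw [← mul_right_cancel₀ hne hG, PowerSeries.coeff_mk]

end LogarithmicDerivative

section PowerSums

-- The angular parts lie in a compact group, where the powers of any element return to `1`.
theorem frequently_norm_pow_le_two_mul_re_pow (t : Finset ℂ) :
    ∃ᶠ n : ℕ in atTop, ∀ z ∈ t, ‖z‖ ^ n ≤ 2 * (z ^ n).re := by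
  have hnhds : ∀ᶠ w : ℂ → Circle in 𝓝 1, ∀ z ∈ t, 1 / 2 < (w z : ℂ).re := by
    refine (eventually_all_finset t).2 fun z _ => ?_
    have hcont : Continuous fun w : ℂ → Circle => (w z : ℂ).re := by fun_prop
    exact hcont.continuousAt.eventually_const_lt (by norm_num)
  refine ((mapClusterPt_one_atTop_pow fun z : ℂ => Circle.exp z.arg).frequently hnhds).mono
    fun n hn z hz => ?_
  have hpolar : z ^ n = (‖z‖ ^ n : ℝ) * ((Circle.exp z.arg ^ n : Circle) : ℂ) := by
    conv_lhs => rw [← Complex.norm_mul_exp_arg_mul_I z, mul_pow]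
    push_cast
    rfl
  rw [hpolar, Complex.re_ofReal_mul]
  have hangle : 1 / 2 < ((Circle.exp z.arg ^ n : Circle) : ℂ).re := hn z hz
  nlinarith [pow_nonneg (norm_nonneg z) n]

theorem norm_le_of_eventually_norm_sum_pow_le {s : Multiset ℂ} {A R : ℝ} (hR : 0 < R)
    (h : ∀ᶠ n in atTop, ‖(s.map (· ^ n)).sum‖ ≤ A * R ^ n) {β : ℂ} (hβ : β ∈ s) : ‖β‖ ≤ R := by
  by_contra! hlt
  have hgrowth : ∀ᶠ n : ℕ in atTop, 2 * A < (‖β‖ / R) ^ n :=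
    (tendsto_pow_atTop_atTop_of_one_lt ((one_lt_div hR).2 hlt)).eventually_gt_atTop _
  obtain ⟨n, hre, hsum, hn⟩ :=
    ((frequently_norm_pow_le_two_mul_re_pow s.toFinset).and_eventually (h.and hgrowth)).exists
  have hre' : ∀ z ∈ s, ‖z‖ ^ n ≤ 2 * (z ^ n).re := fun z hz => hre z (Multiset.mem_toFinset.2 hz)
  have hre_nonneg : ∀ x ∈ s.map fun z => (z ^ n).re, 0 ≤ x := by
    intro x hx
    obtain ⟨z, hz, rfl⟩ := Multiset.mem_map.1 hx
    linarith [hre' z hz, pow_nonneg (norm_nonneg z) n]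
  have hle : ‖β‖ ^ n ≤ 2 * (A * R ^ n) :=
    calc ‖β‖ ^ n ≤ 2 * (β ^ n).re := hre' β hβ
      _ ≤ 2 * (s.map fun z => (z ^ n).re).sum := by
          gcongr
          exact Multiset.single_le_sum hre_nonneg _ (Multiset.mem_map_of_mem _ hβ)
      _ = 2 * (s.map (· ^ n)).sum.re := by
          rw [← Complex.coe_reAddGroupHom, map_multiset_sum, Multiset.map_map]
          rfl
      _ ≤ 2 * (A * R ^ n) := by
          gcongr
          exact (Complex.re_le_norm _).trans hsum
  rw [div_pow, lt_div_iff₀ (pow_pos hR n)] at hn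
  linarith

end PowerSums

section Stepanov

variable {K σ : Type*} [Field K] [Fintype σ]

theorem exists_ne_zero_sum_mul_eq_zero [Nonempty σ] (h : σ → K[X]) {J : ℕ}
    (hdeg : ∀ s, (h s).natDegree + J < Fintype.card σ * J) :
    ∃ c : σ → K[X], c ≠ 0 ∧ (∀ s, c s ∈ degreeLT K J) ∧ ∑ s, h s * c s = 0 := by
  let M := Fintype.card σ * J - 1
  have hM : M < Fintype.card σ * J := Nat.sub_one_lt_of_lt (hdeg (Classical.arbitrary σ))
  let φ : (σ → degreeLT K J) →ₗ[K] K[X] :=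
    ∑ s, LinearMap.mulLeft K (h s) ∘ₗ (degreeLT K J).subtype ∘ₗ LinearMap.proj s
  have hφ (c : σ → degreeLT K J) : φ c = ∑ s, h s * (c s : K[X]) := by simp [φ]
  have hφ_mem (c : σ → degreeLT K J) : φ c ∈ degreeLT K M := by
    rw [hφ]
    refine Submodule.sum_mem _ fun s _ => mem_degreeLT.2 ?_
    calc (h s * (c s : K[X])).degree ≤ (h s).natDegree + (c s : K[X]).degree :=
          (degree_mul_le _ _).trans (by gcongr; exact degree_le_natDegree)
      _ < (h s).natDegree + (J : WithBot ℕ) :=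
          WithBot.add_lt_add_left (WithBot.natCast_ne_bot _) (mem_degreeLT.1 (c s).2)
      _ ≤ M := by exact_mod_cast Nat.le_sub_one_of_lt (hdeg s)
  have hfinrank (n : ℕ) : Module.finrank K (degreeLT K n) = n := by
    rw [(degreeLTEquiv K n).finrank_eq, Module.finrank_fin_fun]
  have : Module.Finite K (degreeLT K M) := .equiv (degreeLTEquiv K M).symm
  have : Module.Finite K (degreeLT K J) := .equiv (degreeLTEquiv K J).symm
  have hker : LinearMap.ker (φ.codRestrict (degreeLT K M) hφ_mem) ≠ ⊥ := by
    refine LinearMap.ker_ne_bot_of_finrank_lt ?_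
    rwa [Module.finrank_pi_fintype, hfinrank, Finset.sum_congr rfl fun _ _ => hfinrank J,
      Finset.sum_const, Finset.card_univ, smul_eq_mul]
  obtain ⟨c, hc, hc_ne⟩ := Submodule.exists_mem_ne_zero_of_ne_bot hker
  rw [LinearMap.ker_codRestrict, LinearMap.mem_ker, hφ] at hc
  refine ⟨fun s => c s, fun h₀ => hc_ne ?_, fun s => (c s).2, hc⟩
  exact funext fun s => Subtype.ext (congrFun h₀ s)

theorem sum_mul_pow_ne_zero {g : σ → K[X]} {Q : ℕ} (hg : ∀ s, g s ≠ 0)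
    (hmod : Function.Injective fun s => (g s).natDegree % Q) {c : σ → K[X]} (hc : c ≠ 0) :
    ∑ s, g s * c s ^ Q ≠ 0 := by
  obtain ⟨s, hs⟩ := Function.ne_iff.1 hc
  have hterm : g s * c s ^ Q ≠ 0 := mul_ne_zero (hg s) (pow_ne_zero _ hs)
  have hdisj : Set.Pairwise {s | s ∈ Finset.univ ∧ g s * c s ^ Q ≠ 0}
      (Function.onFun Ne (degree ∘ fun s => g s * c s ^ Q)) := by
    rintro s ⟨-, hs⟩ t ⟨-, ht⟩ hst heq
    have hnat := natDegree_eq_of_degree_eq heq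
    have hc_ne {s : σ} (hs : g s * c s ^ Q ≠ 0) : c s ^ Q ≠ 0 := right_ne_zero_of_mul hs
    rw [natDegree_mul (hg s) (hc_ne hs), natDegree_mul (hg t) (hc_ne ht), natDegree_pow,
      natDegree_pow] at hnat
    exact hst (hmod (by simpa using congrArg (· % Q) hnat))
  intro hsum
  have hsup := degree_sum_eq_of_disjoint _ _ hdisj
  rw [hsum, degree_zero, eq_comm, Finset.sup_eq_bot_iff] at hsup
  exact hterm (degree_eq_bot.1 (hsup s (Finset.mem_univ s)))

theorem sum_pow_of_card_eq_sq [Fintype K] {Q : ℕ} (hQ : Fintype.card K = Q ^ 2) (f : σ → K) :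
    (∑ s, f s) ^ Q = ∑ s, f s ^ Q := by
  obtain ⟨p, hp⟩ := CharP.exists K
  obtain ⟨n, hprime, hcard⟩ := FiniteField.card K p
  have : Fact p.Prime := ⟨hprime⟩
  obtain ⟨m, -, rfl⟩ := (Nat.dvd_prime_pow hprime).1 (hcard ▸ hQ ▸ dvd_pow_self Q two_ne_zero)
  exact sum_pow_char_pow p m _ _

-- If `∑ h s * c s = 0`, the `Q`-th power of the auxiliary polynomial `∑ g s * c s ^ Q` vanishes
-- on `T`, because `c s x ^ (Q ^ 2) = c s x` for `x` in `K`.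
theorem card_le_of_family_eval_pow_eq [Nonempty σ] [Fintype K] {Q : ℕ}
    (hQ : Fintype.card K = Q ^ 2) {g h : σ → K[X]} {J B : ℕ} {T : Finset K} (hg : ∀ s, g s ≠ 0)
    (hmod : Function.Injective fun s => (g s).natDegree % Q)
    (hB : ∀ s, (g s).natDegree + Q * J ≤ B)
    (hdeg : ∀ s, (h s).natDegree + (J + 1) < Fintype.card σ * (J + 1))
    (hT : ∀ x ∈ T, ∀ s, (g s).eval x ^ Q = (h s).eval x) : T.card ≤ B := by
  classical
  obtain ⟨c, hc, hc_deg, hsum⟩ := exists_ne_zero_sum_mul_eq_zero h hdeg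
  have hψ := sum_mul_pow_ne_zero hg hmod hc
  have hroot : ∀ x ∈ T, (∑ s, g s * c s ^ Q).eval x = 0 := by
    intro x hx
    refine eq_zero_of_pow_eq_zero (n := Q) ?_
    calc (∑ s, g s * c s ^ Q).eval x ^ Q
        = ∑ s, (g s).eval x ^ Q * (c s).eval x ^ Q ^ 2 := by
          simp only [eval_finsetSum, eval_mul, eval_pow, sum_pow_of_card_eq_sq hQ, mul_pow,
            ← pow_mul, sq]
      _ = (∑ s, h s * c s).eval x := by
          simp only [hT x hx, ← hQ, FiniteField.pow_card, eval_finsetSum, eval_mul]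
      _ = 0 := by rw [hsum, eval_zero]
  calc T.card ≤ (∑ s, g s * c s ^ Q).roots.toFinset.card :=
        Finset.card_le_card fun x hx => by
          rw [Multiset.mem_toFinset, mem_roots hψ]
          exact hroot x hx
    _ ≤ (∑ s, g s * c s ^ Q).natDegree := (Multiset.toFinset_card_le _).trans (card_roots' _)
    _ ≤ B := by
        refine natDegree_sum_le_of_forall_le _ _ fun s _ => ?_
        have hcJ : (c s).natDegree ≤ J := natDegree_le_iff_degree_le.2
          (mem_degreeLE.1 (degreeLT_succ_eq_degreeLE (R := K) ▸ hc_deg s))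
        exact (natDegree_mul_le.trans (by gcongr; exact natDegree_pow_le_of_le Q hcJ)).trans (hB s)

-- The families are `X ^ i` for `i ≤ m` together with `A * X ^ i` for `i ≤ n`.
theorem card_le_of_eval_pow_eq [Fintype K] {Q : ℕ} (hQ : Fintype.card K = Q ^ 2) {A B : K[X]}
    {m n J : ℕ} {T : Finset K} (hm : m < A.natDegree % Q) (hn : A.natDegree % Q + n < Q)
    (hX : m * Q + (J + 1) < (m + n + 2) * (J + 1))
    (hB : B.natDegree + n * Q + (J + 1) < (m + n + 2) * (J + 1))
    (hT : ∀ x ∈ T, A.eval x ^ Q = B.eval x) : T.card ≤ A.natDegree + n + Q * J := by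
  have hA : A ≠ 0 := by
    rintro rfl
    simp at hm
  let g : Fin (m + 1) ⊕ Fin (n + 1) → K[X] :=
    Sum.elim (fun i => X ^ (i : ℕ)) fun i => A * X ^ (i : ℕ)
  let h : Fin (m + 1) ⊕ Fin (n + 1) → K[X] :=
    Sum.elim (fun i => X ^ (i * Q : ℕ)) fun i => B * X ^ (i * Q : ℕ)
  have hg_inl (i : Fin (m + 1)) : (g (.inl i)).natDegree = i := natDegree_X_pow _
  have hg_inr (i : Fin (n + 1)) : (g (.inr i)).natDegree = A.natDegree + i :=
    natDegree_mul_X_pow _ hA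
  have hm_le : m < A.natDegree := hm.trans_le (Nat.mod_le _ _)
  refine card_le_of_family_eval_pow_eq hQ (g := g) (h := h) (J := J) ?_ ?_ ?_ ?_ ?_
  · rintro (i | i)
    exacts [pow_ne_zero _ X_ne_zero, mul_ne_zero hA (pow_ne_zero _ X_ne_zero)]
  · have hmod_inl (i : Fin (m + 1)) : (i : ℕ) % Q = i := Nat.mod_eq_of_lt (by lia)
    have hmod_inr (i : Fin (n + 1)) : (A.natDegree + i) % Q = A.natDegree % Q + i := by
      rw [← Nat.mod_add_mod, Nat.mod_eq_of_lt (by lia)]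
    rintro (i | i) (j | j) hij <;> simp only [hg_inl, hg_inr, hmod_inl, hmod_inr] at hij
    · rw [Fin.ext hij]
    · lia
    · lia
    · rw [Fin.ext (Nat.add_left_cancel hij)]
  · rintro (i | i) <;> simp only [hg_inl, hg_inr] <;> lia
  · rw [Fintype.card_sum, Fintype.card_fin, Fintype.card_fin]
    have hmul {i k : ℕ} (hi : i < k + 1) : i * Q ≤ k * Q := by gcongr; lia
    rintro (i | i)
    · have := (natDegree_X_pow_le (R := K) (i * Q)).trans (hmul i.2)
      simp only [h, Sum.elim_inl]
      lia
    · have := natDegree_mul_le.trans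
        (Nat.add_le_add_left ((natDegree_X_pow_le (i * Q)).trans (hmul i.2)) B.natDegree)
      simp only [h, Sum.elim_inr]
      lia
  · rintro x hx (i | i) <;> simp [g, h, hT x hx, mul_pow, pow_mul]

end Stepanov

section QuadraticCharacter

variable {K : Type*} [Field K] [Fintype K] [DecidableEq K]

-- With `A = P ^ ((Q + 1) / 2)`, the equation `A ^ Q = P ^ ((Q ^ 2 - 1) / 2) * A` reads
-- `A ^ Q = ε * A` at every point where the quadratic character of `P` is `ε`.
theorem card_filter_quadraticChar_eval_eq_le {Q : ℕ} (hQ : Fintype.card K = Q ^ 2)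
    (hQ_odd : Odd Q) {P : K[X]} (hP_odd : Odd P.natDegree) (hPQ : P.natDegree < Q) (ε : ℤ) :
    2 * (Finset.univ.filter fun x => quadraticChar K (P.eval x) = ε).card ≤
      Q * (Q + 2 * P.natDegree) := by
  obtain ⟨v, hv⟩ := id hQ_odd
  obtain ⟨u, hu⟩ := hP_odd
  obtain ⟨w, hw⟩ : ∃ w, v = u + 1 + w := ⟨v - u - 1, by lia⟩
  have hdeg : (P ^ (v + 1)).natDegree = u * Q + (u + v + 1) := by
    rw [natDegree_pow, hu, hv]
    ring
  have hmod : (P ^ (v + 1)).natDegree % Q = u + v + 1 := by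
    rw [hdeg, Nat.mul_add_mod_self_right, Nat.mod_eq_of_lt (by lia)]
  have hdeg_le : ((ε : K[X]) * P ^ (v + 1)).natDegree ≤ u * Q + (u + v + 1) := by
    simpa [hdeg] using natDegree_mul_le (p := (ε : K[X])) (q := P ^ (v + 1))
  have hchar (x : K) (hx : quadraticChar K (P.eval x) = ε) :
      P.eval x ^ (2 * v * (v + 1)) = ε := by
    have hK : ringChar K ≠ 2 := fun h =>
      Nat.not_even_iff_odd.2 (hQ ▸ hQ_odd.pow)
        (Nat.even_iff.2 (FiniteField.even_card_of_char_two h))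
    have hhalf : Fintype.card K / 2 = 2 * v * (v + 1) := by
      rw [hQ, hv]
      ring_nf
      lia
    rw [← hx, quadraticChar_eq_pow_of_char_ne_two' hK, hhalf]
  have hcard := card_le_of_eval_pow_eq (A := P ^ (v + 1)) (B := (ε : K[X]) * P ^ (v + 1))
    (m := v) (n := w) (J := v + u)
    (T := Finset.univ.filter fun x => quadraticChar K (P.eval x) = ε) hQ (by lia) (by lia)
    (by rw [hv, hw]; ring_nf; nlinarith) (by rw [hv] at *; nlinarith) fun x hx => by
      simp only [eval_mul, eval_pow, eval_intCast]
      rw [← hchar x ((Finset.mem_filter_univ x).1 hx), hv]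
      ring
  rw [hdeg] at hcard
  nlinarith

theorem abs_sum_quadraticChar_eval_le {Q : ℕ} (hQ : Fintype.card K = Q ^ 2) (hQ_odd : Odd Q)
    {P : K[X]} (hP_odd : Odd P.natDegree) (hPQ : P.natDegree < Q) :
    |∑ x, quadraticChar K (P.eval x)| ≤ 3 * P.natDegree * Q := by
  have hroots : (Finset.univ.filter fun x => P.eval x = 0).card ≤ P.natDegree := by
    have hP : P ≠ 0 := by
      rintro rfl
      simp at hP_odd
    calc (Finset.univ.filter fun x => P.eval x = 0).card ≤ P.roots.toFinset.card :=
          Finset.card_le_card fun x hx => by simpa [hP] using hx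
      _ ≤ P.natDegree := (Multiset.toFinset_card_le _).trans (card_roots' P)
  have hsign {ε : ℤ} (hε : ε = 1 ∨ ε = -1) (y : K) : ε * quadraticChar K y =
      2 * (if quadraticChar K y = ε then 1 else 0) - 1 + if y = 0 then 1 else 0 := by
    rcases eq_or_ne y 0 with rfl | hy
    · rcases hε with rfl | rfl <;> simp
    · rcases hε with rfl | rfl <;> rcases quadraticChar_dichotomy hy with h | h <;> simp [h, hy]
  have hle {ε : ℤ} (hε : ε = 1 ∨ ε = -1) :
      ε * ∑ x, quadraticChar K (P.eval x) ≤ 3 * P.natDegree * Q := by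
    have hcard := card_filter_quadraticChar_eval_eq_le hQ hQ_odd hP_odd hPQ ε
    simp only [Finset.mul_sum, hsign hε, Finset.sum_add_distrib, Finset.sum_sub_distrib]
    simp only [← Finset.mul_sum, Finset.sum_boole, Finset.sum_const, Finset.card_univ, hQ,
      nsmul_eq_mul, mul_one]
    have hd : P.natDegree ≤ P.natDegree * Q := Nat.le_mul_of_pos_right _ hQ_odd.pos
    zify at hcard hroots hd
    push_cast
    linarith
  exact abs_le.2 ⟨by linarith [hle (.inr rfl)], by linarith [hle (.inl rfl)]⟩

end QuadraticCharacter

section Norm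

variable {F K : Type*} [Field F] [Fintype F] [DecidableEq F] [Field K] [Fintype K] [DecidableEq K]
  [Algebra F K]

theorem quadraticChar_norm (hF : ringChar F ≠ 2) (x : K) :
    quadraticChar F (Algebra.norm F x) = quadraticChar K x := by
  have hK : ringChar K ≠ 2 := Algebra.ringChar_eq F K ▸ hF
  have hexp : (Fintype.card K - 1) / (Fintype.card F - 1) * (Fintype.card F / 2) =
      Fintype.card K / 2 := by
    have hdvd : Fintype.card F - 1 ∣ Fintype.card K - 1 := by
      rw [Module.card_eq_pow_finrank (K := F) (V := K)]
      exact Nat.sub_one_dvd_pow_sub_one _ _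
    have hF_odd := FiniteField.odd_card_of_char_ne_two hF
    have hK_odd := FiniteField.odd_card_of_char_ne_two hK
    rw [show Fintype.card F / 2 = (Fintype.card F - 1) / 2 by lia,
      show Fintype.card K / 2 = (Fintype.card K - 1) / 2 by lia]
    exact Nat.div_mul_div hdvd (by lia)
  refine Int.cast_injOn_of_ringChar_ne_two hK ?_ ?_ ?_
  · simpa using quadraticChar_isQuadratic F (Algebra.norm F x)
  · simpa using quadraticChar_isQuadratic K x
  calc ((quadraticChar F (Algebra.norm F x) : ℤ) : K)
      = algebraMap F K (Algebra.norm F x ^ (Fintype.card F / 2)) := by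
        rw [← quadraticChar_eq_pow_of_char_ne_two' hF, map_intCast]
    _ = x ^ (Fintype.card K / 2) := by
        rw [map_pow, FiniteField.algebraMap_norm_eq_pow, ← pow_mul, Nat.card_eq_fintype_card,
          Nat.card_eq_fintype_card, hexp]
    _ = quadraticChar K x := (quadraticChar_eq_pow_of_char_ne_two' hK x).symm

theorem charpolySum_evalChar_quadraticChar (hF : ringChar F ≠ 2) (s : Finset F) :
    charpolySum (evalChar (quadraticChar F) s) K =
      ∑ x : K, quadraticChar K ((∏ a ∈ s, (C (algebraMap F K a) - X)).eval x) := by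
  simp only [charpolySum, evalChar_apply, eval_charpoly_lmul, quadraticChar_norm hF, eval_prod,
    eval_sub, eval_C, eval_X, map_prod]

end Norm

section CharpolySum

variable {F R : Type*} [Field F]

theorem charpolySum_of_finrank_eq_one [Fintype F] [CommSemiring R] (f : F[X] →* R) {K : Type*}
    [Field K] [Fintype K] [Algebra F K] (hK : Module.finrank F K = 1) :
    charpolySum f K = ∑ a : F, f (X - C a) := by
  have hbij := Algebra.finrank_eq_one_iff_bijective_algebraMap.1 hK
  refine (Fintype.sum_bijective _ hbij _ _ fun a => ?_).symm
  rw [charpoly_lmul_eq_minpoly_pow, minpoly.eq_X_sub_C, natDegree_X_sub_C, hK, Nat.div_one, pow_one]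

theorem charpolySum_evalChar_ringHomComp {R' : Type*} [CommRing R] [CommRing R'] (φ : R →+* R')
    (χ : MulChar F R) (s : Finset F) (K : Type*) [Field K] [Fintype K] [Algebra F K] :
    charpolySum (evalChar (χ.ringHomComp φ) s) K = φ (charpolySum (evalChar χ s) K) := by
  simp only [charpolySum, evalChar_apply, MulChar.ringHomComp_apply, map_sum, map_prod]

theorem exists_charpolySum_evalChar_eq [Finite F] [Field R] [IsAlgClosed R] {χ : MulChar F R}
    (hχ : χ ≠ 1) {s : Finset F} (hs : s.Nonempty) (K : ℕ → Type*) [∀ r, Field (K r)]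
    [∀ r, Fintype (K r)] [∀ r, Algebra F (K r)] (hK : ∀ r, Module.finrank F (K r) = r + 1) :
    ∃ t : Multiset R, t.card + 1 ≤ s.card ∧
      ∀ r, charpolySum (evalChar χ s) (K r) = -(t.map (· ^ (r + 1))).sum := by
  obtain ⟨n, hn⟩ := Nat.exists_eq_add_one.2 hs.card_pos
  let L := PowerSeries.trunc (n + 1) (lSeries (evalChar χ s))
  have hL : (L : R⟦X⟧) = lSeries (evalChar χ s) := by
    ext m
    rw [coeff_coe, PowerSeries.coeff_trunc]
    split_ifs with hm
    · rfl
    · exact (coeff_lSeries_evalChar_eq_zero hχ hs (by lia)).symm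
  have hL_zero : L.coeff 0 = 1 := by
    rw [← coeff_coe, hL, coeff_zero_lSeries]
  have hL_deg : L.natDegree ≤ n := Nat.lt_succ_iff.1 (PowerSeries.natDegree_trunc_lt _ n)
  have hL_deriv : (derivative L : R⟦X⟧) =
      .mk (fun r => charpolySum (evalChar χ s) (K r)) * L := by
    rw [← PowerSeries.derivative_coe, hL, derivative_lSeries _ K hK]
  obtain ⟨t, ht, hsum⟩ :=
    exists_powerSums_of_derivative_eq (IsAlgClosed.splits L) hL_zero hL_deriv
  exact ⟨t, by lia, fun r => by rw [← hsum, PowerSeries.coeff_mk]⟩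

end CharpolySum

section OddCase

variable {F : Type*} [Field F] [Fintype F] [DecidableEq F]

theorem norm_le_sqrt_card_of_charpolySum_eq (hF : ringChar F ≠ 2) {s : Finset F} (hs : Odd s.card)
    (K : ℕ → Type*) [∀ r, Field (K r)] [∀ r, Fintype (K r)] [∀ r, Algebra F (K r)]
    (hK : ∀ r, Module.finrank F (K r) = r + 1) {t : Multiset ℂ}
    (ht : ∀ r, ((charpolySum (evalChar (quadraticChar F) s) (K r) : ℤ) : ℂ) =
      -(t.map (· ^ (r + 1))).sum) {α : ℂ} (hα : α ∈ t) : ‖α‖ ≤ √(Fintype.card F) := by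
  classical
  have hbound {m : ℕ} (hm : s.card < m) :
      ‖((t.map (· ^ 2)).map (· ^ m)).sum‖ ≤ 3 * s.card * (Fintype.card F : ℝ) ^ m := by
    obtain ⟨r, hr⟩ : ∃ r, 2 * m = r + 1 := ⟨2 * m - 1, by lia⟩
    have hcard : Fintype.card (K r) = (Fintype.card F ^ m) ^ 2 := by
      rw [Module.card_eq_pow_finrank (K := F), hK, ← hr, mul_comm, pow_mul]
    have hodd : Odd (Fintype.card F ^ m) :=
      (Nat.odd_iff.2 (FiniteField.odd_card_of_char_ne_two hF)).pow
    let P : (K r)[X] := ∏ a ∈ s, (C (algebraMap F (K r) a) - X)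
    have hP : P.natDegree = s.card := by
      have hlin (a : F) : (C (algebraMap F (K r) a) - X).natDegree = 1 := by
        rw [natDegree_sub, natDegree_X_sub_C]
      rw [natDegree_prod _ _ fun a _ => ne_zero_of_natDegree_gt (hlin a).symm.le]
      simp only [hlin, Finset.sum_const, smul_eq_mul, mul_one]
    have hle := abs_sum_quadraticChar_eval_le hcard hodd (P := P) (hP ▸ hs)
      (hP ▸ hm.trans (Nat.lt_pow_self Fintype.one_lt_card))
    rw [← charpolySum_evalChar_quadraticChar hF, hP] at hle
    simp only [Multiset.map_map, Function.comp_def, ← pow_mul, hr]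
    rw [← norm_neg, ← ht, Complex.norm_intCast]
    exact_mod_cast hle
  refine Real.le_sqrt_of_sq_le ?_
  rw [← norm_pow]
  exact norm_le_of_eventually_norm_sum_pow_le (by exact_mod_cast Fintype.card_pos)
    ((eventually_gt_atTop s.card).mono fun m => hbound) (Multiset.mem_map_of_mem _ hα)

theorem abs_sum_prod_quadraticChar_le_of_odd (hF : ringChar F ≠ 2) {s : Finset F}
    (hs : Odd s.card) :
    (|∑ x : F, ∏ a ∈ s, quadraticChar F (x - a)| : ℤ) ≤ (s.card - 1) * √(Fintype.card F) := by
  obtain ⟨p, hp⟩ := CharP.exists F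
  have : Fact p.Prime := ⟨CharP.char_is_prime F p⟩
  let K (r : ℕ) := FiniteField.Extension F p (r + 1)
  have (r : ℕ) : Fintype (K r) := Fintype.ofFinite _
  have hK (r : ℕ) : Module.finrank F (K r) = r + 1 := FiniteField.finrank_extension F p (r + 1)
  have hχ : (quadraticChar F).ringHomComp (Int.castRingHom ℂ) ≠ 1 :=
    (MulChar.ringHomComp_ne_one_iff Int.cast_injective).2 (quadraticChar_ne_one hF)
  let s' := s.map (Equiv.neg F).toEmbedding
  have hs' : s'.card = s.card := Finset.card_map _
  obtain ⟨t, ht_card, ht⟩ :=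
    exists_charpolySum_evalChar_eq hχ (Finset.card_pos.1 (hs' ▸ hs.pos)) K hK
  simp only [charpolySum_evalChar_ringHomComp, eq_intCast] at ht
  have hsum : ((∑ x : F, ∏ a ∈ s, quadraticChar F (x - a) : ℤ) : ℂ) = -t.sum := by
    have h₀ := ht 0
    rw [charpolySum_of_finrank_eq_one _ (hK 0), ← Equiv.sum_comp (Equiv.neg F)] at h₀
    simpa [s', evalChar_apply, neg_add_eq_sub, -Int.cast_sum] using h₀
  calc ((|∑ x : F, ∏ a ∈ s, quadraticChar F (x - a)| : ℤ) : ℝ) = ‖t.sum‖ := by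
        rw [← norm_neg, ← hsum, Complex.norm_intCast, Int.cast_abs]
    _ ≤ (t.map (‖·‖)).sum := norm_multiset_sum_le t
    _ ≤ t.card * √(Fintype.card F) := by
        have hnorm : ∀ y ∈ t.map (‖·‖), y ≤ √(Fintype.card F) := by
          rintro y hy
          obtain ⟨α, hα, rfl⟩ := Multiset.mem_map.1 hy
          exact norm_le_sqrt_card_of_charpolySum_eq hF (hs' ▸ hs) K hK ht hα
        simpa using Multiset.sum_le_card_nsmul _ _ hnorm
    _ ≤ (s.card - 1) * √(Fintype.card F) := by
        gcongr
        exact le_sub_iff_add_le.2 (by exact_mod_cast hs' ▸ ht_card)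

end OddCase

section EvenCase

variable {F : Type*} [Field F] [Fintype F] [DecidableEq F]

theorem abs_prod_quadraticChar_le_one {ι : Type*} (s : Finset ι) (f : ι → F) :
    |∏ i ∈ s, quadraticChar F (f i)| ≤ 1 := by
  rw [Finset.abs_prod]
  refine Finset.prod_le_one (fun _ _ => abs_nonneg _) fun i _ => ?_
  rcases quadraticChar_isQuadratic F (f i) with h | h | h <;> simp [h]

theorem prod_quadraticChar_inv_sub {s : Finset F} (hs : Odd s.card) (h₀ : 0 ∉ s) {t : F}
    (ht : t ≠ 0) :
    quadraticChar F t⁻¹ * ∏ a ∈ s, quadraticChar F (t⁻¹ - a) =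
      (∏ a ∈ s, quadraticChar F (-a)) * ∏ a ∈ s, quadraticChar F (t - a⁻¹) := by
  have hfactor : ∀ a ∈ s, quadraticChar F (t⁻¹ - a) =
      quadraticChar F t⁻¹ * (quadraticChar F (-a) * quadraticChar F (t - a⁻¹)) := by
    intro a ha
    have ha₀ : a ≠ 0 := ne_of_mem_of_not_mem ha h₀
    rw [← map_mul, ← map_mul]
    congr 1
    field_simp
    ring
  have hpow : quadraticChar F t⁻¹ * quadraticChar F t⁻¹ ^ s.card = 1 := by
    obtain ⟨m, hm⟩ := hs.add_one
    rw [← pow_succ', hm, ← two_mul, pow_mul, quadraticChar_sq_one (inv_ne_zero ht), one_pow]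
  rw [Finset.prod_congr rfl hfactor, Finset.prod_mul_distrib, Finset.prod_mul_distrib,
    Finset.prod_const, ← mul_assoc, hpow, one_mul]

theorem sum_prod_quadraticChar_insert_zero {s : Finset F} (hs : Odd s.card) (h₀ : 0 ∉ s) :
    ∑ x : F, ∏ a ∈ insert 0 s, quadraticChar F (x - a) =
      (∏ a ∈ s, quadraticChar F (-a)) *
        (∑ x : F, ∏ a ∈ s, quadraticChar F (x - a⁻¹) - ∏ a ∈ s, quadraticChar F (-a⁻¹)) := by
  have hterm (t : F) : ∏ a ∈ insert 0 s, quadraticChar F (t⁻¹ - a) =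
      if t = 0 then 0
      else (∏ a ∈ s, quadraticChar F (-a)) * ∏ a ∈ s, quadraticChar F (t - a⁻¹) := by
    rw [Finset.prod_insert h₀, sub_zero]
    split_ifs with ht
    · rw [ht, inv_zero, quadraticChar_zero, zero_mul]
    · exact prod_quadraticChar_inv_sub hs h₀ ht
  rw [← Equiv.sum_comp (Equiv.inv F)]
  simp only [Equiv.inv_apply, hterm, Finset.sum_ite, Finset.sum_const_zero, zero_add,
    ← Finset.mul_sum]
  rw [Finset.filter_ne', Finset.sum_erase_eq_sub (Finset.mem_univ 0)]
  simp only [zero_sub]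

theorem abs_sum_prod_quadraticChar_le_of_even (hF : ringChar F ≠ 2) {s : Finset F}
    (hs : s.Nonempty) (hs_even : Even s.card) :
    (|∑ x : F, ∏ a ∈ s, quadraticChar F (x - a)| : ℤ) ≤ (s.card - 1) * √(Fintype.card F) := by
  obtain ⟨b, hb⟩ := hs
  let s₀ : Finset F := (s.erase b).map (Equiv.subRight b).toEmbedding
  have h₀ : 0 ∉ s₀ := by simp [s₀]
  have hcard : s₀.card + 1 = s.card := by
    rw [Finset.card_map, Finset.card_erase_add_one hb]
  have hodd : Odd s₀.card := by
    rw [← Nat.not_even_iff_odd, ← Nat.even_add_one, hcard]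
    exact hs_even
  have hodd_inv : Odd (s₀.map (Equiv.inv F).toEmbedding).card := by rwa [Finset.card_map]
  have htranslate : ∑ x : F, ∏ a ∈ s, quadraticChar F (x - a) =
      ∑ x : F, ∏ a ∈ insert 0 s₀, quadraticChar F (x - a) := by
    rw [← Equiv.sum_comp (Equiv.addRight b)]
    refine Finset.sum_congr rfl fun x _ => ?_
    rw [Finset.prod_insert h₀, Finset.prod_map, ← Finset.mul_prod_erase s _ hb]
    simp [add_sub_assoc, sub_sub_eq_add_sub]
  have hbound := abs_sum_prod_quadraticChar_le_of_odd hF hodd_inv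
  simp only [Finset.prod_map, Finset.card_map, Equiv.coe_toEmbedding, Equiv.inv_apply] at hbound
  have hle : |∑ x : F, ∏ a ∈ s, quadraticChar F (x - a)| ≤
      |∑ x : F, ∏ a ∈ s₀, quadraticChar F (x - a⁻¹)| + 1 := by
    rw [htranslate, sum_prod_quadraticChar_insert_zero hodd h₀, abs_mul]
    calc _ ≤ 1 * (|∑ x : F, ∏ a ∈ s₀, quadraticChar F (x - a⁻¹)| + 1) := by
          gcongr
          · exact abs_prod_quadraticChar_le_one _ _
          · exact (abs_sub _ _).trans (by gcongr; exact abs_prod_quadraticChar_le_one _ _)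
      _ = _ := one_mul _
  have hsqrt : 1 ≤ √(Fintype.card F) := Real.one_le_sqrt.2 (by exact_mod_cast Fintype.card_pos)
  calc ((|∑ x : F, ∏ a ∈ s, quadraticChar F (x - a)| : ℤ) : ℝ)
      ≤ (|∑ x : F, ∏ a ∈ s₀, quadraticChar F (x - a⁻¹)| : ℤ) + 1 := by exact_mod_cast hle
    _ ≤ (s₀.card - 1) * √(Fintype.card F) + √(Fintype.card F) := add_le_add hbound hsqrt
    _ = (s.card - 1) * √(Fintype.card F) := by
        rw [← hcard]
        push_cast
        ring

end EvenCase

theorem stmt_6_general {F : Type*} [Field F] [Fintype F] [DecidableEq F] (hF : ringChar F ≠ 2)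
    {s : Finset F} (hs : s.Nonempty) :
    (|∑ x : F, ∏ a ∈ s, quadraticChar F (x - a)| : ℤ) ≤ (s.card - 1) * √(Fintype.card F) := by
  rcases s.card.even_or_odd with hs_even | hs_odd
  · exact abs_sum_prod_quadraticChar_le_of_even hF hs hs_even
  · exact abs_sum_prod_quadraticChar_le_of_odd hF hs_odd

theorem stmt_6 (p : ℕ) [Fact p.Prime] (hp : p ≠ 2) (k : ℕ) (hk : 0 < k)
    (a : Fin k → ZMod p) (hinj : Function.Injective a) :
    (|∑ x : ZMod p, ∏ i : Fin k, quadraticChar (ZMod p) (x - a i)| : ℝ) ≤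
      ((k : ℝ) - 1) * Real.sqrt p := by
  have : NeZero k := ⟨hk.ne'⟩
  have hbound := stmt_6_general (F := ZMod p) (by rwa [ZMod.ringChar_zmod_n])
    (Finset.univ_nonempty.map (f := ⟨a, hinj⟩))
  simpa using hbound
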